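/- Let T be a finite-dimensional nilpotent Lie algebra over a field F of nilpotency class 3 with dim [T,T] = 2 such that T is stem (i.e. Z(T) ⊆ [T,T]). Then T is not capable if and only if dim T ≥ 6. -/

import Mathlib

open Module

universe u

/-- A witness to the capability of a Lie algebra `L` over `F`: a Lie algebra `E`
together with an isomorphism `L ≃ E ⧸ Z(E)`. -/
structure CapableWitness (F : Type u) (L : Type u) [Field F] [LieRing L] [LieAlgebra F L] where
  carrier : Type u
  [lieRing : LieRing carrier]
  [lieAlgebra : LieAlgebra F carrier]
  equiv : L ≃ₗ⁅F⁆ (carrier ⧸ LieAlgebra.center F carrier)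

/-- A Lie algebra `L` over a field `F` is capable if there exists a Lie algebra `E` over `F`
with `L ≅ E ⧸ Z(E)`. -/
def IsCapable (F : Type u) (L : Type u) [Field F] [LieRing L] [LieAlgebra F L] : Prop :=
  Nonempty (CapableWitness F L)


/-- Normal form data. -/
structure SetupData (F T : Type*) [Field F] [LieRing T] [LieAlgebra F T] where
  a : T
  b : T
  c : T
  z : T
  A : T →ₗ[F] F
  P : T →ₗ[F] F
  Q : T →ₗ[F] F
  hz : z ≠ 0
  Pc : P c = 1
  Pz : P z = 0
  Qc : Q c = 0
  Qz : Q z = 1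
  br : ∀ x y : T, ⁅x, y⁆ = P ⁅x, y⁆ • c + Q ⁅x, y⁆ • z
  xz : ∀ x : T, ⁅x, z⁆ = 0
  xc : ∀ x : T, ⁅x, c⁆ = A x • z
  Aa : A a = 1
  Ab : A b = 0
  ab : ⁅a, b⁆ = c
  cen : ∀ x : T, (∀ y : T, ⁅y, x⁆ = 0) → ∃ k : F, x = k • z

namespace SetupData
variable {F T : Type*} [Field F] [LieRing T] [LieAlgebra F T] (S : SetupData F T)

lemma zx (x : T) : ⁅S.z, x⁆ = 0 := by rw [← lie_skew, S.xz, neg_zero]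

lemma cx (x : T) : ⁅S.c, x⁆ = -(S.A x • S.z) := by rw [← lie_skew, S.xc]

lemma ac : ⁅S.a, S.c⁆ = S.z := by rw [S.xc, S.Aa, one_smul]

lemma smul_z {k : F} (h : k • S.z = 0) : k = 0 := (smul_eq_zero.1 h).resolve_right S.hz

lemma Ac : S.A S.c = 0 := S.smul_z (by rw [← S.xc, lie_self])

lemma Az : S.A S.z = 0 := S.smul_z (by rw [← S.xc, S.zx])

lemma Abr (x y : T) : S.A ⁅x, y⁆ = 0 := by
  rw [S.br, map_add, map_smul, map_smul, S.Ac, S.Az]; simp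

lemma Pker {x y : T} (hx : S.A x = 0) (hy : S.A y = 0) : S.P ⁅x, y⁆ = 0 := by
  have h := leibniz_lie S.a x y
  rw [S.br x y, S.br S.a x, S.br S.a y] at h
  simp only [lie_add, add_lie, lie_smul, smul_lie, S.xz, S.zx, S.xc, S.cx, hx, hy, S.Aa] at h
  exact S.smul_z (by simpa using h)

/-- projection -/
def pr (y : T) : T := y - S.A y • S.a - S.P ⁅S.a, y⁆ • S.b - S.Q ⁅S.a, y⁆ • S.c

lemma pr_A (y : T) : S.A (S.pr y) = 0 := by
  simp [pr, S.Aa, S.Ab, S.Ac]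

lemma a_pr (y : T) : ⁅S.a, S.pr y⁆ = 0 := by
  simp only [pr, lie_sub, lie_smul, S.ab, S.ac, lie_self]
  nth_rw 1 [S.br S.a y]
  simp

lemma pr_eq (y : T) : y = S.A y • S.a + S.P ⁅S.a, y⁆ • S.b + S.Q ⁅S.a, y⁆ • S.c + S.pr y := by
  simp only [pr]; abel

lemma big_of_noncomm {x y : T} [FiniteDimensional F T] (hx : S.A x = 0) (hy : S.A y = 0)
    (ax : ⁅S.a, x⁆ = 0) (ay : ⁅S.a, y⁆ = 0) (h : ⁅x, y⁆ ≠ 0) : 6 ≤ finrank F T := by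
  have li : LinearIndependent F ![S.a, S.b, S.c, x, y, S.z] := by
    rw [Fintype.linearIndependent_iff]
    intro g hg
    simp only [Fin.sum_univ_six, Matrix.cons_val] at hg
    have h0 : g 0 = 0 := by
      have := congrArg S.A hg
      simpa [S.Aa, S.Ab, S.Ac, S.Az, hx, hy] using this
    rw [h0] at hg
    have hh := congrArg (fun t => ⁅S.a, t⁆) hg
    simp only [lie_add, lie_smul, S.ab, S.ac, lie_self, ax, ay, S.xz, lie_zero] at hh
    have h1 : g 1 = 0 := by
      have := congrArg S.P hh
      simpa [S.Pc, S.Pz] using this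
    have h2 : g 2 = 0 := by
      have := congrArg S.Q hh
      simpa [S.Qc, S.Qz] using this
    rw [h1, h2] at hg
    have h4 : g 4 = 0 := by
      have := congrArg (fun t => ⁅x, t⁆) hg
      simpa [S.xz, h] using this
    have h3 : g 3 = 0 := by
      have := congrArg (fun t => ⁅t, y⁆) hg
      simpa [S.zx, h] using this
    rw [h3, h4] at hg
    have h5 : g 5 = 0 := S.smul_z (by simpa using hg)
    intro i
    fin_cases i <;> assumption
  simpa using li.fintype_card_le_finrank

lemma noncomm_of_big [FiniteDimensional F T] (hn : 6 ≤ finrank F T) :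
    ∃ x y : T, S.A x = 0 ∧ S.A y = 0 ∧ ⁅S.a, x⁆ = 0 ∧ ⁅S.a, y⁆ = 0 ∧ ⁅x, y⁆ = S.z := by
  by_cases hab : ∀ x y : T, S.A x = 0 → S.A y = 0 → ⁅S.a, x⁆ = 0 → ⁅S.a, y⁆ = 0 → ⁅x, y⁆ = 0
  · exfalso
    let ada : T →ₗ[F] T := (LieAlgebra.ad F T S.a : T →ₗ[F] T)
    let adb : T →ₗ[F] T := (LieAlgebra.ad F T S.b : T →ₗ[F] T)
    let φ : T →ₗ[F] (Fin 4 → F) := LinearMap.pi ![S.A, S.P ∘ₗ ada, S.Q ∘ₗ ada, S.Q ∘ₗ adb]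
    have hr := φ.finrank_range_add_finrank_ker
    have h4 : finrank F (LinearMap.range φ) ≤ 4 := by
      simpa using Submodule.finrank_le (LinearMap.range φ)
    have hle : LinearMap.ker φ ≤ Submodule.span F {S.z} := by
      intro x hx
      have hx' := LinearMap.mem_ker.1 hx
      have e0 : S.A x = 0 := congrFun hx' 0
      have e1 : S.P ⁅S.a, x⁆ = 0 := congrFun hx' 1
      have e2 : S.Q ⁅S.a, x⁆ = 0 := congrFun hx' 2
      have e3 : S.Q ⁅S.b, x⁆ = 0 := congrFun hx' 3
      have ax : ⁅S.a, x⁆ = 0 := by rw [S.br, e1, e2]; simp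
      have bx : ⁅S.b, x⁆ = 0 := by rw [S.br, S.Pker S.Ab e0, e3]; simp
      obtain ⟨k, hk⟩ := S.cen x (fun y => by
        rw [S.pr_eq y]
        simp [add_lie, ax, bx, S.cx, e0, hab _ _ (S.pr_A y) e0 (S.a_pr y) ax])
      exact Submodule.mem_span_singleton.2 ⟨k, hk.symm⟩
    have := Submodule.finrank_mono hle
    rw [finrank_span_singleton S.hz] at this
    omega
  · push Not at hab
    obtain ⟨x, y, hx, hy, ax, ay, h⟩ := hab
    have hxy : ⁅x, y⁆ = S.Q ⁅x, y⁆ • S.z := by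
      conv_lhs => rw [S.br, S.Pker hx hy]
      simp
    have hq : S.Q ⁅x, y⁆ ≠ 0 := fun h0 => h (by rw [hxy, h0, zero_smul])
    refine ⟨(S.Q ⁅x, y⁆)⁻¹ • x, y, by simp [hx], hy, by simp [ax], ay, ?_⟩
    rw [smul_lie]
    nth_rw 2 [hxy]
    rw [smul_smul, inv_mul_cancel₀ hq, one_smul]

/-- Functional giving the pairing with `b`. -/
def g (y : T) : F := S.Q ⁅S.b, S.pr y⁆

lemma g_add (x y : T) : S.g (x + y) = S.g x + S.g y := by
  have : S.pr (x + y) = S.pr x + S.pr y := by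
    simp only [pr, map_add, lie_add, add_smul]; abel
  simp [g, this]

lemma g_smul (k : F) (y : T) : S.g (k • y) = k * S.g y := by
  have : S.pr (k • y) = k • S.pr y := by
    simp only [pr, map_smul, lie_smul, smul_sub, smul_assoc]
  simp [g, this]

lemma g_z : S.g S.z = 0 := by simp [g, pr, S.xz, S.Az]
lemma g_c : S.g S.c = 0 := by simp [g, pr, S.xc, S.Ac, S.Aa, S.Pz, S.Qz]

lemma g_br (x y : T) : S.g ⁅x, y⁆ = 0 := by
  rw [S.br, g_add, g_smul, g_smul, g_z, g_c]; simp

lemma b_pr (y : T) : ⁅S.b, S.pr y⁆ = S.g y • S.z := by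
  rw [S.br, S.Pker S.Ab (S.pr_A y), zero_smul, zero_add]; rfl

lemma pr_b (y : T) : ⁅S.pr y, S.b⁆ = -(S.g y • S.z) := by rw [← lie_skew, b_pr]

lemma ba : ⁅S.b, S.a⁆ = -S.c := by rw [← lie_skew, S.ab]

lemma pr_a (y : T) : ⁅S.pr y, S.a⁆ = 0 := by rw [← lie_skew, S.a_pr, neg_zero]

lemma br_formula (hab : ∀ x y : T, S.A x = 0 → S.A y = 0 → ⁅S.a, x⁆ = 0 → ⁅S.a, y⁆ = 0 → ⁅x, y⁆ = 0)
    (x y : T) : ⁅x, y⁆ = (S.A x * S.P ⁅S.a, y⁆ - S.A y * S.P ⁅S.a, x⁆) • S.c +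
      (S.A x * S.Q ⁅S.a, y⁆ - S.A y * S.Q ⁅S.a, x⁆ +
        S.P ⁅S.a, x⁆ * S.g y - S.P ⁅S.a, y⁆ * S.g x) • S.z := by
  have h := hab _ _ (S.pr_A x) (S.pr_A y) (S.a_pr x) (S.a_pr y)
  conv_lhs => rw [S.pr_eq x, S.pr_eq y]
  simp only [lie_add, add_lie, lie_smul, smul_lie, S.a_pr, S.b_pr, S.pr_b, S.pr_a, S.ab, S.ba, S.xc,
    S.cx, S.Aa, S.Ab, S.pr_A, S.Ac, h, lie_self, map_add, map_smul, smul_eq_mul]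
  module

end SetupData

lemma capable_of_surj {F T E : Type u} [Field F] [LieRing T] [LieAlgebra F T] [LieRing E]
    [LieAlgebra F E] (p : E →ₗ⁅F⁆ T) (hp : Function.Surjective p)
    (hk : p.ker = LieAlgebra.center F E) : IsCapable F T := by
  have e1 : (E ⧸ p.ker) ≃ₗ⁅F⁆ T :=
    p.quotKerEquivRange.trans
      ((LieEquiv.ofEq _ _ (congrArg _ ((p.range_eq_top).2 hp))).trans LieSubalgebra.topEquiv)
  rw [hk] at e1
  exact ⟨⟨E, e1.symm⟩⟩

/-- Underlying space of a one-dimensional central extension. -/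
def CExt (F T : Type u) [Field F] [LieRing T] [LieAlgebra F T] (_f : T →ₗ[F] T →ₗ[F] F) : Type u :=
  T × F

section
variable {F T : Type u} [Field F] [LieRing T] [LieAlgebra F T] (f : T →ₗ[F] T →ₗ[F] F)

instance : AddCommGroup (CExt F T f) := inferInstanceAs (AddCommGroup (T × F))
instance : Module F (CExt F T f) := inferInstanceAs (Module F (T × F))

/-- Lie ring structure from a cocycle. -/
@[reducible] def CExt.lieRing (alt : ∀ x, f x x = 0)
    (coc : ∀ x y w, f x ⁅y, w⁆ = f ⁅x, y⁆ w + f y ⁅x, w⁆) : LieRing (CExt F T f) where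
  bracket x y := ((⁅x.1, y.1⁆, f x.1 y.1) : T × F)
  add_lie x y w := by
    refine Prod.ext (add_lie x.1 y.1 w.1) ?_
    change f (x.1 + y.1) w.1 = f x.1 w.1 + f y.1 w.1
    simp
  lie_add x y w := by
    refine Prod.ext (lie_add x.1 y.1 w.1) ?_
    change f x.1 (y.1 + w.1) = f x.1 y.1 + f x.1 w.1
    simp
  lie_self x := Prod.ext (lie_self x.1) (alt x.1)
  leibniz_lie x y w := Prod.ext (leibniz_lie x.1 y.1 w.1) (coc x.1 y.1 w.1)

lemma capable_of_cocycle (alt : ∀ x, f x x = 0)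
    (coc : ∀ x y w, f x ⁅y, w⁆ = f ⁅x, y⁆ w + f y ⁅x, w⁆)
    (hc : ∀ x : T, (∀ y : T, ⁅y, x⁆ = 0) → (∀ y, f y x = 0) → x = 0) : IsCapable F T := by
  let : LieRing (CExt F T f) := CExt.lieRing f alt coc
  let : LieAlgebra F (CExt F T f) :=
    { (inferInstance : Module F (CExt F T f)) with
      lie_smul := fun k x y => by
        refine Prod.ext (lie_smul k x.1 y.1) ?_
        change f x.1 (k • y.1) = k • f x.1 y.1
        simp }
  let p : CExt F T f →ₗ⁅F⁆ T :=
    { toFun := fun x => x.1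
      map_add' := fun x y => rfl
      map_smul' := fun k x => rfl
      map_lie' := rfl }
  refine capable_of_surj p (fun t => ⟨((t, 0) : T × F), rfl⟩) ?_
  ext x
  rw [LieHom.mem_ker, LieModule.mem_maxTrivSubmodule]
  constructor
  · intro hx y
    have hx' : x.1 = 0 := hx
    refine Prod.ext ?_ ?_
    · change ⁅y.1, x.1⁆ = 0
      rw [hx', lie_zero]
    · change f y.1 x.1 = 0
      rw [hx', map_zero]
  · intro h
    exact hc x.1 (fun y => congrArg Prod.fst (h ((y, 0) : T × F)))
      (fun y => congrArg Prod.snd (h ((y, 0) : T × F)))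
end

lemma SetupData.capable {F T : Type u} [Field F] [LieRing T] [LieAlgebra F T]
    (S : SetupData F T)
    (hab : ∀ x y : T, S.A x = 0 → S.A y = 0 → ⁅S.a, x⁆ = 0 → ⁅S.a, y⁆ = 0 → ⁅x, y⁆ = 0) :
    IsCapable F T := by
  let f : T →ₗ[F] T →ₗ[F] F := LinearMap.mk₂ F
    (fun x y => S.A x * S.Q y - S.A y * S.Q x +
      (S.Q ⁅S.a, x⁆ * S.g y - S.Q ⁅S.a, y⁆ * S.g x))
    (by intros; simp only [map_add, lie_add, S.g_add]; ring)
    (by intros; simp only [map_smul, lie_smul, S.g_smul, smul_eq_mul]; ring)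
    (by intros; simp only [map_add, lie_add, S.g_add]; ring)
    (by intros; simp only [map_smul, lie_smul, S.g_smul, smul_eq_mul]; ring)
  have hf : ∀ x y, f x y = S.A x * S.Q y - S.A y * S.Q x +
      (S.Q ⁅S.a, x⁆ * S.g y - S.Q ⁅S.a, y⁆ * S.g x) := fun x y => by
    simp [f, LinearMap.mk₂_apply]
  have hQ : ∀ x y, S.Q ⁅x, y⁆ = S.A x * S.Q ⁅S.a, y⁆ - S.A y * S.Q ⁅S.a, x⁆ +
        S.P ⁅S.a, x⁆ * S.g y - S.P ⁅S.a, y⁆ * S.g x := fun x y => by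
    conv_lhs => rw [S.br_formula hab x y]
    simp [S.Qc, S.Qz]
  have hP : ∀ x y, S.P ⁅x, y⁆ = S.A x * S.P ⁅S.a, y⁆ - S.A y * S.P ⁅S.a, x⁆ := fun x y => by
    conv_lhs => rw [S.br_formula hab x y]
    simp [S.Pc, S.Pz]
  have hQQ : ∀ x y, S.Q ⁅S.a, ⁅x, y⁆⁆ = S.P ⁅x, y⁆ := fun x y => by
    conv_lhs => rw [S.br x y]
    simp [S.xz, S.xc, S.Aa, S.Qz]
  refine capable_of_cocycle f (fun x => by rw [hf]; ring) (fun x y w => ?_) (fun x h1 h2 => ?_)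
  · simp only [hf, S.Abr, S.g_br, hQQ]
    rw [hQ x y, hQ y w, hQ x w, hP x y, hP y w, hP x w]
    ring
  · obtain ⟨k, rfl⟩ := S.cen x h1
    have := h2 S.a
    rw [hf] at this
    have hk : k = 0 := by
      simpa [S.Aa, S.Qz, S.Az, S.xz, S.g_smul, S.g_z] using this
    rw [hk, zero_smul]

lemma SetupData.not_capable {F T : Type u} [Field F] [LieRing T] [LieAlgebra F T]
    (S : SetupData F T) {x y : T} (hx : S.A x = 0) (hy : S.A y = 0)
    (ax : ⁅S.a, x⁆ = 0) (ay : ⁅S.a, y⁆ = 0) (hxy : ⁅x, y⁆ = S.z) : ¬ IsCapable F T := by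
  rintro ⟨⟨E, e⟩⟩
  obtain ⟨p, hp, hk⟩ : ∃ p : E →ₗ⁅F⁆ T, Function.Surjective p ∧
      ∀ u, p u = 0 ↔ ∀ v : E, ⁅v, u⁆ = 0 := by
    let q : E →ₗ⁅F⁆ (E ⧸ LieAlgebra.center F E) :=
      { (LieAlgebra.center F E).toSubmodule.mkQ with
        toFun := LieSubmodule.Quotient.mk
        map_lie' := fun {_ _} => rfl }
    have hq : Function.Surjective q := Quot.mk_surjective
    refine ⟨e.symm.toLieHom.comp q, e.symm.surjective.comp hq, fun u => ?_⟩
    rw [← LieModule.mem_maxTrivSubmodule F E E u, ← LieSubmodule.Quotient.mk_eq_zero']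
    change e.symm (q u) = 0 ↔ q u = 0
    exact map_eq_zero_iff e.symm e.symm.injective
  have hk' : ∀ u v : E, p u = 0 → ⁅u, v⁆ = 0 := fun u v h => by
    rw [← lie_skew, (hk u).1 h, neg_zero]
  obtain ⟨a, ha⟩ := hp S.a
  obtain ⟨c, hc⟩ := hp S.c
  obtain ⟨d, hd⟩ := hp x
  obtain ⟨d', hd'⟩ := hp y
  have key : ∀ w : E, ⁅w, d⁆ = 0 → ⁅w, d'⁆ = 0 → ⁅w, ⁅d, d'⁆⁆ = 0 := fun w h h' => by
    rw [leibniz_lie, h, h']; simp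
  have key' : ∀ w : E, p ⁅w, d⁆ = 0 → p ⁅w, d'⁆ = 0 → ⁅w, ⁅d, d'⁆⁆ = 0 := fun w h h' => by
    rw [leibniz_lie, hk' _ _ h, (hk _).1 h']; simp
  have haz : ⁅a, ⁅d, d'⁆⁆ = 0 := key' a (by simp [ha, hd, ax]) (by simp [ha, hd', ay])
  have hcz : ⁅c, ⁅d, d'⁆⁆ = 0 :=
    key' c (by simp [hc, hd, S.cx, hx]) (by simp [hc, hd', S.cx, hy])
  have hzac : ∀ w : E, ⁅w, ⁅d, d'⁆⁆ = ⁅w, ⁅a, c⁆⁆ := fun w => by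
    rw [← sub_eq_zero, ← lie_sub]
    exact (hk _).1 (by simp [hd, hd', ha, hc, hxy, S.ac]) w
  have hpz : p ⁅d, d'⁆ = S.z := by simp [hd, hd', hxy]
  have hu : ∀ u : E, S.A (p u) = 0 → ⁅u, ⁅d, d'⁆⁆ = 0 := fun u h => by
    rw [hzac, leibniz_lie u a c, (hk ⁅u, c⁆).1 (by simp [hc, S.xc, h]), add_zero]
    have h1 : p (⁅u, a⁆ - (S.P (p ⁅u, a⁆) • c + S.Q (p ⁅u, a⁆) • ⁅d, d'⁆)) = 0 := by
      rw [map_sub, map_add, map_smul, map_smul, hpz, hc, LieHom.map_lie, ← S.br, sub_self]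
    have h2 := hk' _ c h1
    rw [sub_lie, sub_eq_zero] at h2
    rw [h2, add_lie, smul_lie, smul_lie, lie_self, ← lie_skew ⁅d, d'⁆ c, hcz]
    simp
  have : p ⁅d, d'⁆ = 0 := (hk _).2 fun v => by
    have h := hu (v - S.A (p v) • a) (by simp [ha, S.Aa])
    rw [sub_lie, smul_lie, haz] at h
    simpa using h
  exact S.hz (hpz ▸ this)

lemma exists_setup {F T : Type u} [Field F] [LieRing T] [LieAlgebra F T] [FiniteDimensional F T]
    (hclass : LieModule.lowerCentralSeries F T T 2 ≠ ⊥ ∧ LieModule.lowerCentralSeries F T T 3 = ⊥)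
    (hder : finrank F ↥(LieModule.lowerCentralSeries F T T 1) = 2)
    (hstem : LieAlgebra.center F T ≤ LieModule.lowerCentralSeries F T T 1) :
    Nonempty (SetupData F T) := by
  obtain ⟨h2, h3⟩ := hclass
  set L1 := LieModule.lowerCentralSeries F T T 1 with hL1
  have m1 : ∀ x y : T, ⁅x, y⁆ ∈ L1 := fun x y => by
    rw [hL1, LieModule.lowerCentralSeries_succ]
    exact LieSubmodule.lie_mem_lie (LieSubmodule.mem_top _) (by simp)
  have m2 : ∀ x : T, ∀ y ∈ L1, ∀ w : T, ⁅w, ⁅x, y⁆⁆ = 0 := fun x y hy w => by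
    have : ⁅w, ⁅x, y⁆⁆ ∈ LieModule.lowerCentralSeries F T T 3 := by
      rw [LieModule.lowerCentralSeries_succ, LieModule.lowerCentralSeries_succ]
      exact LieSubmodule.lie_mem_lie (LieSubmodule.mem_top _)
        (LieSubmodule.lie_mem_lie (LieSubmodule.mem_top _) hy)
    rw [h3] at this
    simpa using this
  -- the pair (a, c0)
  obtain ⟨a, c0, hc0, hz⟩ : ∃ a c0 : T, c0 ∈ L1 ∧ ⁅a, c0⁆ ≠ 0 := by
    by_contra! hcon
    apply h2
    rw [LieModule.lowerCentralSeries_succ, LieSubmodule.lie_eq_bot_iff]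
    intro x _ m hm
    exact hcon x m hm
  set z := ⁅a, c0⁆ with hzdef
  have xz : ∀ x, ⁅x, z⁆ = 0 := fun x => m2 a c0 hc0 x
  have span : ∀ c ∈ L1, ⁅a, c⁆ = z → ∃ P Q : T →ₗ[F] F, P c = 1 ∧ P z = 0 ∧ Q c = 0 ∧ Q z = 1 ∧
      ∀ t ∈ L1, t = P t • c + Q t • z := by
    intro c hc hac
    let φ : F × F →ₗ[F] T :=
      (LinearMap.toSpanSingleton F T c).coprod (LinearMap.toSpanSingleton F T z)
    have hφ : ∀ p q, φ (p, q) = p • c + q • z := fun p q => by simp [φ]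
    have hinj : LinearMap.ker φ = ⊥ := by
      rw [LinearMap.ker_eq_bot']
      rintro ⟨p, q⟩ h
      rw [hφ] at h
      have hp : p = 0 := by
        have := congrArg (fun t => ⁅a, t⁆) h
        simpa [hac, xz, hz] using this
      subst hp
      have hq : q = 0 := by simpa [hz] using h
      rw [hq]; rfl
    obtain ⟨g, hg⟩ := φ.exists_leftInverse_of_injective hinj
    have hg' : ∀ v, g (φ v) = v := fun v => congrArg (fun f => f v) hg
    have hr : LinearMap.range φ = L1.toSubmodule := by
      apply Submodule.eq_of_le_of_finrank_eq
      · rintro _ ⟨⟨p, q⟩, rfl⟩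
        rw [hφ]
        exact L1.toSubmodule.add_mem (L1.toSubmodule.smul_mem _ hc)
          (L1.toSubmodule.smul_mem _ (m1 _ _))
      · rw [LinearMap.finrank_range_of_inj (LinearMap.ker_eq_bot.1 hinj)]
        rw [Module.finrank_prod, Module.finrank_self]
        exact hder.symm
    have gc : g c = (1, 0) := by have := hg' (1, 0); rwa [hφ, one_smul, zero_smul, add_zero] at this
    have gz : g z = (0, 1) := by have := hg' (0, 1); rwa [hφ, one_smul, zero_smul, zero_add] at this
    refine ⟨LinearMap.fst F F F ∘ₗ g, LinearMap.snd F F F ∘ₗ g, by simp [gc], by simp [gz],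
      by simp [gc], by simp [gz], fun t ht => ?_⟩
    have ht' : t ∈ LinearMap.range φ := hr ▸ ht
    obtain ⟨v, rfl⟩ := ht'
    simp only [LinearMap.comp_apply, hg']
    exact hφ v.1 v.2
  obtain ⟨P, Q, Pc, Pz, Qc, Qz, br⟩ := span c0 hc0 rfl
  have zx : ∀ x : T, ⁅z, x⁆ = 0 := fun x => by rw [← lie_skew, xz, neg_zero]
  let A : T →ₗ[F] F := -(Q ∘ₗ (LieAlgebra.ad F T c0 : T →ₗ[F] T))
  have hA : ∀ x, A x = Q ⁅x, c0⁆ := fun x => by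
    rw [← lie_skew x c0, map_neg]; rfl
  have xc0 : ∀ x, ⁅x, c0⁆ = A x • z := fun x => by
    have h := br _ (m1 x c0)
    have h' := m2 x c0 hc0 a
    rw [h] at h'
    have : P ⁅x, c0⁆ = 0 := by simpa [xz, hz, ← hzdef] using h'
    rw [this, zero_smul, zero_add, ← hA] at h
    exact h
  have Aa : A a = 1 := by rw [hA, ← hzdef, Qz]
  have c0x : ∀ x, ⁅c0, x⁆ = -(A x • z) := fun x => by rw [← lie_skew, xc0]
  have Pker : ∀ x y, A x = 0 → A y = 0 → P ⁅x, y⁆ = 0 := by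
    intro x y hx hy
    have h := leibniz_lie a x y
    rw [br _ (m1 x y), br _ (m1 a x), br _ (m1 a y)] at h
    simp only [lie_add, add_lie, lie_smul, smul_lie, xz, zx, xc0, c0x, hx, hy, Aa] at h
    simpa [hz] using h
  obtain ⟨b, Ab, hb⟩ : ∃ b, A b = 0 ∧ P ⁅a, b⁆ ≠ 0 := by
    by_contra! hcon
    have hall : ∀ x y : T, P ⁅x, y⁆ = 0 := by
      intro x y
      have h1 := hcon (x - A x • a) (by simp [Aa])
      have h2 := hcon (y - A y • a) (by simp [Aa])
      have h3 := Pker (x - A x • a) (y - A y • a) (by simp [Aa]) (by simp [Aa])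
      have e1 : P ⁅a, x⁆ = 0 := by simpa using h1
      have e2 : P ⁅a, y⁆ = 0 := by simpa using h2
      have e3 : P ⁅x, a⁆ = 0 := by rw [← lie_skew, map_neg, e1, neg_zero]
      simpa [e1, e2, e3] using h3
    have hle : L1.toSubmodule ≤ LinearMap.ker P := by
      rw [hL1, LieModule.lowerCentralSeries_succ, LieSubmodule.lieIdeal_oper_eq_linear_span',
        Submodule.span_le]
      rintro _ ⟨x, _, y, _, rfl⟩
      exact hall x y
    have : P c0 = 0 := hle hc0
    rw [Pc] at this
    exact one_ne_zero this
  let b' := (P ⁅a, b⁆)⁻¹ • b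
  have hPb : P ⁅a, b'⁆ = 1 := by simp [b', hb]
  have Ab' : A b' = 0 := by simp [b', Ab]
  have hc' : ⁅a, b'⁆ = c0 + Q ⁅a, b'⁆ • z := by
    have := br _ (m1 a b')
    rwa [hPb, one_smul] at this
  have xc : ∀ x, ⁅x, ⁅a, b'⁆⁆ = A x • z := fun x => by
    rw [hc', lie_add, lie_smul, xz, xc0]; simp
  obtain ⟨P', Q', Pc', Pz', Qc', Qz', br'⟩ := span ⁅a, b'⁆ (m1 _ _) (by rw [xc, Aa, one_smul])
  refine ⟨⟨a, b', ⁅a, b'⁆, z, A, P', Q', hz, Pc', Pz', Qc', Qz', fun x y => br' _ (m1 x y), xz, xc,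
    Aa, Ab', rfl, fun x hx => ?_⟩⟩
  have hxL : x ∈ L1 := hstem ((LieModule.mem_maxTrivSubmodule F T T x).2 hx)
  have h := br _ hxL
  have ha := hx a
  rw [h] at ha
  have : P x = 0 := by simpa [xz, hz, ← hzdef] using ha
  rw [this, zero_smul, zero_add] at h
  exact ⟨_, h⟩

/-- A finite-dimensional stem nilpotent Lie algebra of class 3 with 2-dimensional derived
subalgebra is non-capable iff its dimension is at least 6. -/
theorem stem_class_three_not_capable_iff_dim_ge_six
    (F T : Type u) [Field F] [LieRing T] [LieAlgebra F T] [FiniteDimensional F T]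
    (hclass : LieModule.lowerCentralSeries F T T 2 ≠ ⊥ ∧ LieModule.lowerCentralSeries F T T 3 = ⊥)
    (hder : finrank F ↥(LieModule.lowerCentralSeries F T T 1) = 2)
    (hstem : LieAlgebra.center F T ≤ LieModule.lowerCentralSeries F T T 1) :
    ¬ IsCapable F T ↔ 6 ≤ finrank F T := by
  obtain ⟨S⟩ := exists_setup hclass hder hstem
  constructor
  · intro h
    by_contra hn
    refine h (S.capable fun x y hx hy ax ay => ?_)
    by_contra hxy
    exact hn (S.big_of_noncomm hx hy ax ay hxy)
  · intro hn
    obtain ⟨x, y, hx, hy, ax, ay, h⟩ := S.noncomm_of_big hn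
    exact S.not_capable hx hy ax ay h
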